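/- arXiv:1003.1984 — 3 statements merged into one kernel-verified Lean document; each statement's English description precedes it below -/
import Mathlib

section
/- Let n ≥ 3. There exists a bound q₀ (depending on n) such that for every finite field F with |F| ≥ q₀ and char F ≠ 2, there is no bijective map Φ : M_n(F) → M_n(F) satisfying per A = det Φ(A) for all A ∈ M_n(F). -/
/-- The permanent of the rows `B` restricted to the columns in `S`. -/
def columnPermanent {ι F : Type*} [Fintype ι] [DecidableEq ι] [CommRing F] {m : ℕ}
    (B : Fin m → ι → F) (S : Finset ι) : F :=
  ∑ f : Fin m → ι with Function.Injective f ∧ ∀ i, f i ∈ S, ∏ i, B i (f i)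

/-- The row families all of whose maximal permanents with columns in `U` vanish. -/
def permanentVanishing {ι : Type*} (F : Type*) [Fintype ι] [DecidableEq ι] [CommRing F]
    [Fintype F] [DecidableEq F] (m : ℕ) (U : Finset ι) : Finset (Fin m → ι → F) :=
  {B | ∀ S ∈ U.powersetCard m, columnPermanent B S = 0}

section Counting

variable {ι F : Type*} [Fintype ι] [DecidableEq ι]

theorem columnPermanent_zero [CommRing F] (B : Fin 0 → ι → F) (S : Finset ι) :
    columnPermanent B S = 1 := by
  simp [columnPermanent, Function.injective_of_subsingleton]

theorem columnPermanent_cons [CommRing F] {m : ℕ} (b : ι → F) (B : Fin m → ι → F)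
    (S : Finset ι) :
    columnPermanent (Fin.cons b B : Fin (m + 1) → ι → F) S =
      ∑ l ∈ S, b l * columnPermanent B (S.erase l) := by
  simp only [columnPermanent, Finset.sum_filter]
  rw [← (Fin.consEquiv fun _ => ι).sum_comp, Fintype.sum_prod_type,
    ← Finset.sum_subset S.subset_univ]
  · refine Finset.sum_congr rfl fun l hl => ?_
    rw [Finset.mul_sum]
    refine Finset.sum_congr rfl fun g _ => ?_
    have : (Function.Injective (Fin.cons l g : Fin (m + 1) → ι) ∧
        ∀ i, (Fin.cons l g : Fin (m + 1) → ι) i ∈ S) ↔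
        (Function.Injective g ∧ ∀ i, g i ∈ S.erase l) := by
      simp only [Fin.cons_injective_iff, Fin.forall_fin_succ, Fin.cons_zero, Fin.cons_succ,
        Finset.mem_erase, Set.mem_range]
      grind
    simp [Fin.consEquiv, this, Fin.prod_univ_succ]
  · intro l _ hl
    refine Finset.sum_eq_zero fun g _ => if_neg fun h => hl ?_
    simpa using h.2 0

theorem permanent_eq_columnPermanent [CommRing F] {n : ℕ} (A : Matrix (Fin n) (Fin n) F) :
    A.permanent = columnPermanent A Finset.univ := by
  rw [← Matrix.permanent_transpose]
  unfold Matrix.permanent columnPermanent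
  refine Finset.sum_bij (fun σ _ => ⇑σ) ?_ ?_ ?_ ?_
  · intro σ _
    simp [σ.injective]
  · intro σ _ τ _ h
    exact DFunLike.coe_injective h
  · intro f hf
    have hf := (Finset.mem_filter.mp hf).2.1
    exact ⟨Equiv.ofBijective f (Finite.injective_iff_bijective.mp hf), Finset.mem_univ _, rfl⟩
  · intro σ _
    rfl

/-- If the coordinates outside `T` determine the elements of `Z`, then `Z` has codimension at
least `#T`. -/
theorem card_mul_pow_le_of_determined [Fintype F] (Z : Finset (ι → F)) (T : Finset ι)
    (h : ∀ b ∈ Z, ∀ c ∈ Z, (∀ i, i ∉ T → b i = c i) → b = c) :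
    Z.card * Fintype.card F ^ T.card ≤ Fintype.card F ^ Fintype.card ι := by
  have hZ : Z.card ≤ Fintype.card ({i // i ∉ T} → F) := by
    rw [← Finset.card_univ]
    refine Finset.card_le_card_of_injOn (fun b i => b i) (fun _ _ => Finset.mem_univ _) ?_
    intro b hb c hc hbc
    exact h b hb c hc fun i hi => congrFun hbc ⟨i, hi⟩
  rw [Fintype.card_fun, Fintype.card_subtype_compl, Fintype.card_coe] at hZ
  calc _ ≤ Fintype.card F ^ (Fintype.card ι - T.card) * Fintype.card F ^ T.card :=
        Nat.mul_le_mul_right _ hZ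
    _ = _ := by rw [← pow_add, Nat.sub_add_cancel T.card_le_univ]

variable [Field F] [Fintype F] [DecidableEq F] {m : ℕ}

/-- The possible first rows of members of `permanentVanishing` with the remaining rows `B`. -/
def vanishingRows (B : Fin m → ι → F) (U : Finset ι) : Finset (ι → F) :=
  {b | (Fin.cons b B : Fin (m + 1) → ι → F) ∈ permanentVanishing F (m + 1) U}

theorem mem_vanishingRows {B : Fin m → ι → F} {U : Finset ι} {b : ι → F} :
    b ∈ vanishingRows B U ↔ ∀ S ∈ U.powersetCard (m + 1),
      ∑ l ∈ S, b l * columnPermanent B (S.erase l) = 0 := by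
  simp [vanishingRows, permanentVanishing, columnPermanent_cons]

theorem sub_mem_vanishingRows {B : Fin m → ι → F} {U : Finset ι} {b c : ι → F}
    (hb : b ∈ vanishingRows B U) (hc : c ∈ vanishingRows B U) : b - c ∈ vanishingRows B U := by
  rw [mem_vanishingRows] at *
  intro S hS
  simp [sub_mul, hb S hS, hc S hS]

theorem card_vanishingRows_mul_pow_le (B : Fin m → ι → F) (U T : Finset ι)
    (h : ∀ b ∈ vanishingRows B U, (∀ i, i ∉ T → b i = 0) → b = 0) :
    (vanishingRows B U).card * Fintype.card F ^ T.card ≤ Fintype.card F ^ Fintype.card ι := by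
  refine card_mul_pow_le_of_determined _ T fun b hb c hc hbc => ?_
  exact sub_eq_zero.mp (h _ (sub_mem_vanishingRows hb hc) fun i hi => sub_eq_zero.mpr (hbc i hi))

theorem card_vanishingRows_le (B : Fin m → ι → F) (U : Finset ι) :
    (vanishingRows B U).card ≤ Fintype.card F ^ Fintype.card ι := by
  simpa using card_vanishingRows_mul_pow_le B U ∅ fun b _ h => funext fun i => h i (by simp)

theorem card_vanishingRows_of_columnPermanent_ne_zero (B : Fin m → ι → F) {U : Finset ι} {d : ℕ}
    (hU : U.card = m + d) (hB : B ∉ permanentVanishing F m U) :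
    (vanishingRows B U).card * Fintype.card F ^ d ≤ Fintype.card F ^ Fintype.card ι := by
  obtain ⟨S, hS, hne⟩ : ∃ S ∈ U.powersetCard m, columnPermanent B S ≠ 0 := by
    simpa [permanentVanishing, and_assoc] using hB
  obtain ⟨hSU, hcard⟩ := Finset.mem_powersetCard.mp hS
  have hT : (U \ S).card = d := by rw [Finset.card_sdiff_of_subset hSU]; omega
  rw [← hT]
  refine card_vanishingRows_mul_pow_le B U _ fun b hb h0 => funext fun t => ?_
  by_cases ht : t ∈ U \ S
  · obtain ⟨htU, htS⟩ := Finset.mem_sdiff.mp ht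
    have h := mem_vanishingRows.mp hb (insert t S) (Finset.mem_powersetCard.mpr
      ⟨Finset.insert_subset htU hSU, by rw [Finset.card_insert_of_notMem htS, hcard]⟩)
    rw [Finset.sum_insert htS, Finset.erase_insert htS, Finset.sum_eq_zero fun l hl => by
      rw [h0 l (by simp [hl]), zero_mul], add_zero] at h
    exact (mul_eq_zero.mp h).resolve_right hne
  · exact h0 t ht

theorem card_permanentVanishing_succ (m : ℕ) (U : Finset ι) :
    (permanentVanishing F (m + 1) U).card =
      ∑ B : Fin m → ι → F, (vanishingRows B U).card := by
  simp only [vanishingRows, Finset.card_filter]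
  rw [← Fintype.sum_prod_type_right',
    ← Fintype.sum_equiv (Fin.consEquiv fun _ => ι → F).symm
      (fun A => if A ∈ permanentVanishing F (m + 1) U then 1 else 0) _ fun A => by
        simp [Fin.consEquiv], ← Finset.card_filter]
  simp

theorem card_permanentVanishing_succ_mul_pow_le (m d : ℕ) (U : Finset ι) (hU : U.card = m + d) :
    (permanentVanishing F (m + 1) U).card * Fintype.card F ^ d ≤
      (permanentVanishing F m U).card * (Fintype.card F ^ Fintype.card ι * Fintype.card F ^ d) +
        (Fintype.card F ^ Fintype.card ι) ^ (m + 1) := by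
  rw [card_permanentVanishing_succ, Finset.sum_mul]
  calc _ ≤ ∑ B : Fin m → ι → F, ((if B ∈ permanentVanishing F m U then
          Fintype.card F ^ Fintype.card ι * Fintype.card F ^ d else 0) +
            Fintype.card F ^ Fintype.card ι) := by
        refine Finset.sum_le_sum fun B _ => ?_
        split_ifs with hB
        · exact (Nat.mul_le_mul_right _ (card_vanishingRows_le B U)).trans (Nat.le_add_right _ _)
        · rw [zero_add]
          exact card_vanishingRows_of_columnPermanent_ne_zero B hU hB
    _ = _ := by
        rw [Finset.sum_add_distrib, ← Finset.sum_filter]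
        simp [pow_succ]

theorem card_permanentVanishing_mul_pow_le (m d : ℕ) (U : Finset ι) (hU : U.card = m + d) :
    (permanentVanishing F m U).card * Fintype.card F ^ (d + 1) ≤
      m * (Fintype.card F ^ Fintype.card ι) ^ m := by
  induction m generalizing d with
  | zero =>
    simp [permanentVanishing, columnPermanent_zero]
  | succ m ih =>
    have hd : U.card = m + (d + 1) := by omega
    have ih := ih (d + 1) hd
    have step := card_permanentVanishing_succ_mul_pow_le (F := F) m (d + 1) U hd
    have hq : 0 < Fintype.card F := Fintype.card_pos
    generalize Fintype.card F ^ Fintype.card ι = Q at *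
    generalize Fintype.card F = q at *
    calc _ ≤ (permanentVanishing F m U).card * (Q * q ^ (d + 1)) + Q ^ (m + 1) := step
      _ ≤ (permanentVanishing F m U).card * (Q * q ^ (d + 2)) + Q ^ (m + 1) := by
          have : q ^ (d + 1) ≤ q ^ (d + 2) := Nat.pow_le_pow_right hq (by omega)
          gcongr
      _ = ((permanentVanishing F m U).card * q ^ (d + 1 + 1)) * Q + Q ^ (m + 1) := by ring
      _ ≤ (m * Q ^ m) * Q + Q ^ (m + 1) := by gcongr
      _ = _ := by ring

theorem card_vanishingRows_of_triple (h2 : (2 : F) ≠ 0) (hm : Fintype.card ι = m + 2)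
    (B : Fin m → ι → F) {x y z : ι} (hxy : x ≠ y) (hxz : x ≠ z) (hyz : y ≠ z)
    (hz : columnPermanent B {x, y}ᶜ ≠ 0) (hy : columnPermanent B {x, z}ᶜ ≠ 0)
    (hx : columnPermanent B {y, z}ᶜ ≠ 0) :
    (vanishingRows B Finset.univ).card * Fintype.card F ^ 3 ≤
      Fintype.card F ^ Fintype.card ι := by
  have hT : ({x, y, z} : Finset ι).card = 3 :=
    Finset.card_eq_three.mpr ⟨x, y, z, hxy, hxz, hyz, rfl⟩
  rw [← hT]
  refine card_vanishingRows_mul_pow_le B _ _ fun b hb h0 => ?_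
  have key : ∀ u v w : ι, u ≠ v → u ≠ w → v ≠ w → ({x, y, z} : Finset ι) = {u, v, w} →
      b v * columnPermanent B {u, v}ᶜ + b w * columnPermanent B {u, w}ᶜ = 0 := by
    intro u v w huv huw hvw hset
    have h := mem_vanishingRows.mp hb {u}ᶜ (Finset.mem_powersetCard.mpr
      ⟨Finset.subset_univ _, by rw [Finset.card_compl, Finset.card_singleton]; omega⟩)
    rw [← Finset.sum_subset (s₁ := {v, w})] at h
    · rw [Finset.sum_pair hvw] at h
      rwa [← Finset.compl_insert, ← Finset.compl_insert, Finset.pair_comm v,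
        Finset.pair_comm w] at h
    · intro a; simp; grind
    · intro a _ ha
      by_cases hau : a = u
      · simp_all
      · rw [h0 a (by rw [hset]; simp_all), zero_mul]
  have h1 := key x y z hxy hxz hyz rfl
  have h2' := key y x z hxy.symm hyz hxz (by grind)
  have h3 := key z x y hxz.symm hyz.symm hxy (by grind)
  rw [Finset.pair_comm y x] at h2'
  rw [Finset.pair_comm z x, Finset.pair_comm z y] at h3
  generalize columnPermanent B {x, y}ᶜ = p at *
  generalize columnPermanent B {x, z}ᶜ = r at *
  generalize columnPermanent B {y, z}ᶜ = s at *
  have hbx : b x = 0 := by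
    have : 2 * p * r * b x = 0 := by linear_combination r * h2' + p * h3 - s * h1
    simpa [h2, hz, hy] using this
  have hby : b y = 0 := by simpa [hbx, hx] using h3
  have hbz : b z = 0 := by simpa [hbx, hx] using h2'
  funext i
  by_cases hi : i ∈ ({x, y, z} : Finset ι)
  · simp only [Finset.mem_insert, Finset.mem_singleton] at hi
    rcases hi with rfl | rfl | rfl <;> assumption
  · exact h0 i hi

/-- In characteristic different from `2`, simultaneous vanishing of the maximal permanents of an
`(m + 1) × (m + 2)` matrix is a condition of codimension at least three. -/
theorem card_permanentVanishing_mul_pow_three_le (two_ne : (2 : F) ≠ 0) (hm : 1 ≤ m)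
    (hι : Fintype.card ι = m + 2) :
    (permanentVanishing F (m + 1) (Finset.univ : Finset ι)).card * Fintype.card F ^ 3 ≤
      (4 * m + 1) * (Fintype.card F ^ Fintype.card ι) ^ (m + 1) := by
  obtain ⟨x, y, z, hxy, hxz, hyz⟩ := Fintype.two_lt_card_iff.mp (show 2 < Fintype.card ι by omega)
  set q := Fintype.card F
  set Q := q ^ Fintype.card ι
  let V := permanentVanishing F m (Finset.univ : Finset ι)
  let W : Finset ι → Finset (Fin m → ι → F) := fun S => permanentVanishing F m S
  have hV : V.card * q ^ 3 ≤ m * Q ^ m :=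
    card_permanentVanishing_mul_pow_le m 2 _ (by rw [Finset.card_univ, hι])
  have hW : ∀ u v : ι, u ≠ v → (W {u, v}ᶜ).card * q ≤ m * Q ^ m := fun u v huv => by
    simpa using card_permanentVanishing_mul_pow_le (F := F) m 0 ({u, v}ᶜ : Finset ι)
      (by rw [Finset.card_compl, Finset.card_pair huv]; omega)
  have memW : ∀ (B : Fin m → ι → F) (u v : ι), u ≠ v → B ∉ W {u, v}ᶜ →
      columnPermanent B {u, v}ᶜ ≠ 0 := by
    intro B u v huv hB h
    refine hB (Finset.mem_filter.mpr ⟨Finset.mem_univ _, fun S hS => ?_⟩)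
    obtain ⟨hS, hcard⟩ := Finset.mem_powersetCard.mp hS
    rwa [Finset.eq_of_subset_of_card_le hS
      (by rw [Finset.card_compl, Finset.card_pair huv]; omega)]
  rw [card_permanentVanishing_succ, Finset.sum_mul]
  calc _ ≤ ∑ B : Fin m → ι → F, ((if B ∈ V then Q * q ^ 3 else 0) +
          ((if B ∈ W {x, y}ᶜ then Q * q else 0) + (if B ∈ W {x, z}ᶜ then Q * q else 0) +
            (if B ∈ W {y, z}ᶜ then Q * q else 0)) + Q) := by
        refine Finset.sum_le_sum fun B _ => ?_
        by_cases hB : B ∈ V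
        · rw [if_pos hB]
          have : (vanishingRows B Finset.univ).card * q ^ 3 ≤ Q * q ^ 3 :=
            Nat.mul_le_mul_right _ (card_vanishingRows_le B Finset.univ)
          omega
        have hd : (vanishingRows B Finset.univ).card * q ^ 3 ≤ Q * q := by
          rw [pow_succ, ← mul_assoc]
          exact Nat.mul_le_mul_right _ (card_vanishingRows_of_columnPermanent_ne_zero B
            (by rw [Finset.card_univ, hι]) hB)
        by_cases h1 : B ∈ W {x, y}ᶜ
        · rw [if_pos h1]; omega
        by_cases h2 : B ∈ W {x, z}ᶜ
        · rw [if_pos h2]; omega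
        by_cases h3 : B ∈ W {y, z}ᶜ
        · rw [if_pos h3]; omega
        have : (vanishingRows B Finset.univ).card * q ^ 3 ≤ Q :=
          card_vanishingRows_of_triple two_ne hι B hxy hxz hyz 
            (memW B _ _ hxy h1) (memW B _ _ hxz h2) (memW B _ _ hyz h3)
        omega
    _ = (V.card * q ^ 3 + ((W {x, y}ᶜ).card * q + (W {x, z}ᶜ).card * q +
          (W {y, z}ᶜ).card * q) + Q ^ m) * Q := by
        simp only [Finset.sum_add_distrib, ← Finset.sum_filter]
        simp [Q, q]
        ring
    _ ≤ (m * Q ^ m + (m * Q ^ m + m * Q ^ m + m * Q ^ m) + Q ^ m) * Q := by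
        have := hW x y hxy
        have := hW x z hxz
        have := hW y z hyz
        gcongr
    _ = _ := by ring

end Counting

theorem card_GL_mul_pow_three_le {F : Type*} [Field F] [Fintype F] [DecidableEq F] (m : ℕ) :
    Nat.card (GL (Fin (m + 2)) F) * Fintype.card F ^ 3 ≤
      (Fintype.card F ^ (m + 2)) ^ (m + 2) *
        ((Fintype.card F ^ 2 - 1) * (Fintype.card F - 1)) := by
  rw [Matrix.card_GL_field, Fin.prod_univ_castSucc, Fin.prod_univ_castSucc]
  generalize Fintype.card F = q
  simp only [Fin.val_castSucc, Fin.val_last]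
  have h1 : q ^ (m + 2) - q ^ m = q ^ m * (q ^ 2 - 1) := by
    rw [Nat.mul_sub, mul_one, pow_add]
  have h2 : q ^ (m + 2) - q ^ (m + 1) = q ^ m * q * (q - 1) := by
    rw [Nat.mul_sub, mul_one, pow_add, pow_succ q m]; ring_nf
  have h3 : ∏ i : Fin m, (q ^ (m + 2) - q ^ (i : ℕ)) ≤ (q ^ (m + 2)) ^ m := by
    simpa using Finset.prod_le_pow_card (Finset.univ : Finset (Fin m))
      (fun i => q ^ (m + 2) - q ^ (i : ℕ)) (q ^ (m + 2)) fun i _ => Nat.sub_le _ _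
  rw [h1, h2]
  calc _ ≤ (q ^ (m + 2)) ^ m * (q ^ m * (q ^ 2 - 1)) * (q ^ m * q * (q - 1)) * q ^ 3 := by gcongr
    _ = _ := by ring

/-- The zero permanents are fewer than the zero determinants over large finite fields of
characteristic different from `2`. -/
theorem card_permanent_eq_zero_lt {F : Type*} [Field F] [Fintype F] [DecidableEq F] {m : ℕ}
    (hm : 1 ≤ m) (h2 : (2 : F) ≠ 0) (hq : 4 * m + 2 < Fintype.card F) :
    Fintype.card {A : Matrix (Fin (m + 2)) (Fin (m + 2)) F // A.permanent = 0} <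
      Fintype.card {A : Matrix (Fin (m + 2)) (Fin (m + 2)) F // A.det = 0} := by
  have hper : Fintype.card {A : Matrix (Fin (m + 2)) (Fin (m + 2)) F // A.permanent = 0} =
      (permanentVanishing F (m + 2) (Finset.univ : Finset (Fin (m + 2)))).card := by
    have : Finset.powersetCard (m + 2) (Finset.univ : Finset (Fin (m + 2))) = {Finset.univ} := by
      simpa using Finset.powersetCard_self (Finset.univ : Finset (Fin (m + 2)))
    have mem (A : Fin (m + 2) → Fin (m + 2) → F) :
        A ∈ permanentVanishing F (m + 2) (Finset.univ : Finset (Fin (m + 2))) ↔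
          columnPermanent A Finset.univ = 0 := by
      simp [permanentVanishing, this]
    refine Fintype.card_of_subtype _ fun A => ?_
    rw [permanent_eq_columnPermanent]
    exact mem A
  have hdet : Fintype.card {A : Matrix (Fin (m + 2)) (Fin (m + 2)) F // A.det = 0} +
      Nat.card (GL (Fin (m + 2)) F) = (Fintype.card F ^ (m + 2)) ^ (m + 2) := by
    have e : GL (Fin (m + 2)) F ≃ {A : Matrix (Fin (m + 2)) (Fin (m + 2)) F // ¬ A.det = 0} :=
      Submonoid.unitsTypeEquivIsUnitSubmonoid.toEquiv.trans (Equiv.subtypeEquivRight fun A => by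
        rw [IsUnit.mem_submonoid_iff, Matrix.isUnit_iff_isUnit_det, isUnit_iff_ne_zero])
    rw [Nat.card_congr e, Nat.card_eq_fintype_card, Fintype.card_subtype_compl,
      Nat.add_sub_cancel' (Fintype.card_subtype_le _)]
    exact (Fintype.card_fun (α := Fin (m + 2)) (β := Fin (m + 2) → F)).trans (by simp)
  have hstep := card_permanentVanishing_succ_mul_pow_le (F := F) (m + 1) 1
    (Finset.univ : Finset (Fin (m + 2))) (by simp)
  have hcodim := card_permanentVanishing_mul_pow_three_le (ι := Fin (m + 2)) h2 hm (by simp)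
  have hGL := card_GL_mul_pow_three_le (F := F) m
  rw [← hper, Fintype.card_fin] at hstep
  rw [Fintype.card_fin] at hcodim
  generalize Fintype.card F = q at *
  obtain ⟨Q, hQ⟩ : ∃ Q, Q = q ^ (m + 2) := ⟨_, rfl⟩
  rw [← hQ] at hstep hcodim hGL hdet
  by_contra! hle
  generalize Fintype.card {A : Matrix (Fin (m + 2)) (Fin (m + 2)) F // A.permanent = 0} = P at *
  generalize Fintype.card {A : Matrix (Fin (m + 2)) (Fin (m + 2)) F // A.det = 0} = D at *
  generalize (permanentVanishing F (m + 1) (Finset.univ : Finset (Fin (m + 2)))).card = V at *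
  generalize Nat.card (GL (Fin (m + 2)) F) = G at *
  have hQpos : 0 < Q := hQ ▸ pow_pos (by omega) _
  have key : Q ^ (m + 2) * q ^ 3 ≤
      Q ^ (m + 2) * (4 * m + 1 + q ^ 2 + (q ^ 2 - 1) * (q - 1)) := by
    calc Q ^ (m + 2) * q ^ 3 ≤ (P + G) * q ^ 3 := by rw [← hdet]; gcongr
      _ = P * q ^ 1 * q ^ 2 + G * q ^ 3 := by ring
      _ ≤ (V * (Q * q ^ 1) + Q ^ (m + 2)) * q ^ 2 +
          Q ^ (m + 2) * ((q ^ 2 - 1) * (q - 1)) := by gcongr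
      _ = V * q ^ 3 * Q + Q ^ (m + 2) * (q ^ 2 + (q ^ 2 - 1) * (q - 1)) := by ring
      _ ≤ (4 * m + 1) * Q ^ (m + 1) * Q +
          Q ^ (m + 2) * (q ^ 2 + (q ^ 2 - 1) * (q - 1)) := by gcongr
      _ = _ := by ring
  have key := Nat.le_of_mul_le_mul_left key (pow_pos hQpos _)
  obtain ⟨p, rfl⟩ : ∃ p, q = p + 1 := ⟨q - 1, by omega⟩
  have : (p + 1) ^ 2 - 1 = p ^ 2 + 2 * p := by
    rw [show (p + 1) ^ 2 = p ^ 2 + 2 * p + 1 by ring, Nat.add_sub_cancel]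
  rw [this, Nat.add_sub_cancel] at key
  nlinarith


/-- **Polya permanent problem over finite fields.**
For `n ≥ 3` there is a bound `q₀` (depending on `n`) such that for every finite field
`F` with at least `q₀` elements and characteristic different from `2`, no bijective map
`Φ : Mₙ(F) → Mₙ(F)` satisfies `per A = det (Φ A)` for all `A`. -/
theorem no_bijective_permanent_to_determinant_converter (n : ℕ) (hn : 3 ≤ n) :
    ∃ q₀ : ℕ, ∀ (F : Type) [Field F] [Fintype F],
      q₀ ≤ Fintype.card F → ringChar F ≠ 2 →
      ¬ ∃ Φ : Matrix (Fin n) (Fin n) F → Matrix (Fin n) (Fin n) F,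
          Function.Bijective Φ ∧ ∀ A, A.permanent = (Φ A).det := by
  obtain ⟨m, rfl⟩ : ∃ m, n = m + 2 := ⟨n - 2, by omega⟩
  refine ⟨4 * m + 3, fun F _ _ hq hchar ⟨Φ, hΦ, h⟩ => ?_⟩
  classical
  have hlt := card_permanent_eq_zero_lt (F := F) (m := m) (by omega)
    (Ring.two_ne_zero hchar) (by omega)
  exact hlt.ne (Fintype.card_congr ((Equiv.ofBijective Φ hΦ).subtypeEquiv fun A => by simp [h]))
end

section
/- Let n ≥ 3. There exists a bound q₀ (depending on n) such that for every finite ring R without zero divisors with |R| ≥ q₀ and char R ≠ 2, there is no bijective map Φ : M_n(R) → M_n(R) satisfying per A = det Φ(A) for all A ∈ M_n(R). -/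
/-- The permanent of a square matrix over a (not necessarily commutative) ring:
`per A = Σ_{σ ∈ Sₙ} a_{1 σ(1)} ⋯ a_{n σ(n)}`, the product taken in row order. -/
def Matrix.ncPermanent {n : ℕ} {R : Type*} [Ring R]
    (A : Matrix (Fin n) (Fin n) R) : R :=
  ∑ σ : Equiv.Perm (Fin n), ((List.finRange n).map (fun i => A i (σ i))).prod

/-- The determinant of a square matrix over a (not necessarily commutative) ring:
`det A = Σ_{σ ∈ Sₙ} sgn(σ) a_{1 σ(1)} ⋯ a_{n σ(n)}`, the product taken in row order. -/
def Matrix.ncDet {n : ℕ} {R : Type*} [Ring R]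
    (A : Matrix (Fin n) (Fin n) R) : R :=
  ∑ σ : Equiv.Perm (Fin n),
    ((Equiv.Perm.sign σ : ℤ)) • ((List.finRange n).map (fun i => A i (σ i))).prod

/-- The sum of the products `∏ i, B i (f i)` over the injections `f : Fin m → ι` with values
in `T`, defined by expansion along the first row. -/
def injPermanent {ι R : Type*} [DecidableEq ι] [CommRing R] :
    (m : ℕ) → (Fin m → ι → R) → Finset ι → R
  | 0, _, _ => 1
  | m + 1, B, T => ∑ j ∈ T, B 0 j * injPermanent m (Fin.tail B) (T.erase j)

section Expansion

open Finset

variable {ι R : Type*} [DecidableEq ι] [CommRing R]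

lemma injPermanent_cons {m : ℕ} (x : ι → R) (C : Fin m → ι → R) (T : Finset ι) :
    injPermanent (m + 1) (Fin.cons x C : Fin (m + 1) → ι → R) T =
      ∑ j ∈ T, x j * injPermanent m C (T.erase j) := by
  simp [injPermanent]

open Classical in
lemma injPermanent_eq_sum [Fintype ι] (m : ℕ) (B : Fin m → ι → R) (T : Finset ι) :
    injPermanent m B T =
      ∑ f : Fin m → ι, if Function.Injective f ∧ ∀ i, f i ∈ T then ∏ i, B i (f i) else 0 := by
  induction m generalizing T with
  | zero => simp [injPermanent, Function.injective_of_subsingleton]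
  | succ m ih =>
    have hinj : ∀ (j : ι) (f : Fin m → ι),
        Function.Injective (Fin.consEquiv (fun _ : Fin (m + 1) => ι) (j, f)) ↔
          j ∉ Set.range f ∧ Function.Injective f := fun _ _ => Fin.cons_injective_iff
    rw [← (Fin.consEquiv fun _ : Fin (m + 1) => ι).sum_comp, Fintype.sum_prod_type]
    simp only [injPermanent, ih, Fin.consEquiv_apply, Fin.prod_univ_succ, Fin.cons_zero,
      Fin.cons_succ, Fin.forall_fin_succ, hinj, Finset.mul_sum, mul_ite,
      mul_zero, Finset.mem_erase, Fin.tail]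
    rw [← Finset.sum_subset (Finset.subset_univ T)]
    · refine Finset.sum_congr rfl fun j hj => Finset.sum_congr rfl fun f _ => ?_
      refine if_congr ?_ rfl rfl
      simp only [Set.mem_range, not_exists, hj, true_and, forall_and, ne_eq]
      tauto
    · intro j _ hj
      simp [hj]

lemma ncPermanent_eq_injPermanent {n : ℕ} (A : Matrix (Fin n) (Fin n) R) :
    A.ncPermanent = injPermanent n A univ := by
  classical
  refine Eq.trans ?_ (injPermanent_eq_sum n A univ).symm
  rw [← Finset.sum_filter, Matrix.ncPermanent]
  refine Finset.sum_bij' (fun σ _ => σ)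
    (fun f hf => Equiv.ofBijective f
      (Finite.injective_iff_bijective.1 (Finset.mem_filter.1 hf).2.1)) ?_ ?_ ?_ ?_ ?_
  · intro σ _
    simp [σ.injective]
  · simp
  · intro σ _
    ext
    simp
  · intro f hf
    ext
    simp
  · intro σ _
    rw [← Fin.prod_univ_def]

lemma ncDet_eq_det {n : ℕ} (A : Matrix (Fin n) (Fin n) R) : A.ncDet = A.det := by
  rw [← Matrix.det_transpose, Matrix.det_apply, Matrix.ncDet]
  refine Finset.sum_congr rfl fun σ _ => ?_
  rw [← Fin.prod_univ_def]
  rfl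

end Expansion

section Counting

open Finset

variable {ι F : Type*} [Fintype ι] [DecidableEq ι] [Fintype F]

lemma card_filter_cons {m : ℕ} (Q : (Fin (m + 1) → ι → F) → Prop) [DecidablePred Q] :
    #{B | Q B} = ∑ C : Fin m → ι → F, #{x : ι → F | Q (Fin.cons x C)} := by
  simp only [Finset.card_filter]
  rw [← (Fin.consEquiv fun _ : Fin (m + 1) => ι → F).sum_comp, Fintype.sum_prod_type_right]
  rfl

lemma card_le_card_pow (P : (ι → F) → Prop) [DecidablePred P] :
    #{x | P x} ≤ Fintype.card F ^ Fintype.card ι := by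
  rw [← Fintype.card_fun]
  exact Finset.card_le_univ _

variable [Field F]

/-- A subset of `ι → F` closed under subtraction and without nonzero elements supported on `J`
has at most `|F| ^ (|ι| - |J|)` elements. -/
lemma card_filter_mul_pow_le (P : (ι → F) → Prop) [DecidablePred P]
    (hP : ∀ x y, P x → P y → P (x - y))
    (J : Finset ι) (hJ : ∀ d, P d → (∀ i ∉ J, d i = 0) → ∀ i ∈ J, d i = 0) :
    #{x | P x} * Fintype.card F ^ #J ≤ Fintype.card F ^ Fintype.card ι := by
  have hle : #{x | P x} ≤ Fintype.card ({i // i ∉ J} → F) := by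
    refine Finset.card_le_card_of_injOn (fun x i => x i.1) (fun _ _ => Finset.mem_univ _) ?_
    intro x hx y hy hxy
    simp only [Finset.coe_filter, Finset.mem_univ, true_and, Set.mem_ofPred_eq] at hx hy
    have hoff : ∀ i ∉ J, (x - y) i = 0 := fun i hi => sub_eq_zero.2 (congrFun hxy ⟨i, hi⟩)
    funext i
    by_cases hi : i ∈ J
    · exact sub_eq_zero.1 (hJ _ (hP x y hx hy) hoff i hi)
    · exact sub_eq_zero.1 (hoff i hi)
  calc _ ≤ Fintype.card ({i // i ∉ J} → F) * Fintype.card F ^ #J := Nat.mul_le_mul_right _ hle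
    _ = Fintype.card F ^ Fintype.card ι := by
      rw [Fintype.card_fun, ← pow_add, Fintype.card_subtype_compl, Fintype.card_coe,
        Nat.sub_add_cancel (Finset.card_le_univ J)]

open Classical in
lemma card_injPermanent_row_mul_le {m : ℕ} (C : Fin m → ι → F) (T : Finset ι)
    {j : ι} (hj : j ∈ T) (hne : injPermanent m C (T.erase j) ≠ 0) :
    #{x : ι → F | injPermanent (m + 1) (Fin.cons x C : Fin (m + 1) → ι → F) T = 0} *
      Fintype.card F ≤ Fintype.card F ^ Fintype.card ι := by
  have := card_filter_mul_pow_le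
    (fun x : ι → F => injPermanent (m + 1) (Fin.cons x C : Fin (m + 1) → ι → F) T = 0)
    ?_ {j} ?_
  · simpa using this
  · simp only [injPermanent_cons]
    intro x y hx hy
    simp [sub_mul, hx, hy]
  · simp only [injPermanent_cons]
    intro d hd hoff
    rw [Finset.sum_eq_single_of_mem j hj] at hd
    · simpa [hne] using hd
    · intro i _ hij
      simp [hoff i (by simpa using hij)]

open Classical in
lemma card_injPermanent_eq_zero_mul_le (m : ℕ) (T : Finset ι) (hT : #T = m) :
    #{B : Fin m → ι → F | injPermanent m B T = 0} * Fintype.card F ≤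
      m * Fintype.card F ^ (m * Fintype.card ι) := by
  induction m generalizing T with
  | zero => simp [injPermanent]
  | succ m ih =>
    obtain ⟨j, hj⟩ : T.Nonempty := by rw [← Finset.card_pos]; omega
    have h := ih (T.erase j) (by rw [Finset.card_erase_of_mem hj]; omega)
    set q := Fintype.card F
    set c := Fintype.card ι
    have hrow : ∀ C : Fin m → ι → F,
        #{x : ι → F | injPermanent (m + 1) (Fin.cons x C : Fin (m + 1) → ι → F) T = 0} * q ≤
          q ^ c * (1 + q * if injPermanent m C (T.erase j) = 0 then 1 else 0) := by
      intro C
      split_ifs with h0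
      · calc _ ≤ q ^ c * q := Nat.mul_le_mul_right _ (card_le_card_pow _)
          _ ≤ _ := by gcongr; omega
      · simpa using card_injPermanent_row_mul_le C T hj h0
    rw [card_filter_cons, Finset.sum_mul]
    refine (Finset.sum_le_sum fun C _ => hrow C).trans ?_
    rw [← Finset.mul_sum, Finset.sum_add_distrib, ← Finset.mul_sum, ← Finset.card_filter]
    simp only [Finset.sum_const, Finset.card_univ, Fintype.card_fun, Fintype.card_fin, smul_eq_mul,
      mul_one]
    calc _ = q ^ c * ((q ^ c) ^ m + #{C : Fin m → ι → F | injPermanent m C (T.erase j) = 0} * q) :=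
          by ring
      _ ≤ q ^ c * ((q ^ c) ^ m + m * q ^ (m * c)) := by gcongr
      _ = _ := by ring

open Classical in
/-- The number of first rows `x` extending `C` to a matrix all of whose maximal subpermanents
inside `T` vanish. -/
lemma card_maximal_row_mul_le (h2 : (2 : F) ≠ 0) {m : ℕ} (C : Fin m → ι → F) (T : Finset ι)
    {a b c : ι} (ha : a ∈ T) (hb : b ∈ T) (hc : c ∈ T) (hab : a ≠ b) (hac : a ≠ c) (hbc : b ≠ c) :
    #{x : ι → F | ∀ j ∈ T,
        injPermanent (m + 1) (Fin.cons x C : Fin (m + 1) → ι → F) (T.erase j) = 0} *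
        Fintype.card F ^ 3 ≤
      Fintype.card F ^ Fintype.card ι *
        (1 + Fintype.card F *
            ((if injPermanent m C ((T.erase a).erase b) = 0 then 1 else 0) +
              (if injPermanent m C ((T.erase a).erase c) = 0 then 1 else 0) +
              (if injPermanent m C ((T.erase b).erase c) = 0 then 1 else 0)) +
          Fintype.card F ^ 3 *
            if ∀ j ∈ T, ∀ k ∈ T.erase j, injPermanent m C ((T.erase j).erase k) = 0
              then 1 else 0) := by
  set q := Fintype.card F
  set P : (ι → F) → Prop := fun x => ∀ j ∈ T,
    injPermanent (m + 1) (Fin.cons x C : Fin (m + 1) → ι → F) (T.erase j) = 0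
  have hP : ∀ x y, P x → P y → P (x - y) := by
    intro x y hx hy j hj
    have h1 := hx j hj
    have h2 := hy j hj
    simp only [injPermanent_cons] at h1 h2 ⊢
    simp [sub_mul, h1, h2]
  have hrow : ∀ d, P d → ∀ J ⊆ T, (∀ i ∉ J, d i = 0) → ∀ j ∈ J,
      ∑ k ∈ J.erase j, d k * injPermanent m C ((T.erase j).erase k) = 0 := by
    intro d hd J hJ hoff j hj
    have h1 := hd j (hJ hj)
    rw [injPermanent_cons] at h1
    rw [← h1]
    refine Finset.sum_subset (Finset.erase_subset_erase _ hJ) fun k hk hk' => ?_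
    rw [hoff k, zero_mul]
    intro hkJ
    exact hk' (Finset.mem_erase.2 ⟨(Finset.mem_erase.1 hk).1, hkJ⟩)
  by_cases hall : ∀ j ∈ T, ∀ k ∈ T.erase j, injPermanent m C ((T.erase j).erase k) = 0
  · rw [if_pos hall]
    calc _ ≤ q ^ Fintype.card ι * q ^ 3 := Nat.mul_le_mul_right _ (card_le_card_pow _)
      _ ≤ _ := by gcongr; omega
  rw [if_neg hall]
  by_cases hgen : injPermanent m C ((T.erase a).erase b) = 0 ∨
      injPermanent m C ((T.erase a).erase c) = 0 ∨ injPermanent m C ((T.erase b).erase c) = 0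
  · push Not at hall
    obtain ⟨j, hj, k, hk, hjk⟩ := hall
    have hkj := (Finset.mem_erase.1 hk).1
    have hkT := (Finset.mem_erase.1 hk).2
    have key := card_filter_mul_pow_le P hP {j, k} ?_
    · rw [Finset.card_pair hkj.symm] at key
      calc _ = #{x | P x} * q ^ 2 * q := by ring
        _ ≤ q ^ Fintype.card ι * q := Nat.mul_le_mul_right _ key
        _ = q ^ Fintype.card ι * (q * 1) := by ring
        _ ≤ q ^ Fintype.card ι * (1 + q *
            ((if injPermanent m C ((T.erase a).erase b) = 0 then 1 else 0) +
              (if injPermanent m C ((T.erase a).erase c) = 0 then 1 else 0) +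
              (if injPermanent m C ((T.erase b).erase c) = 0 then 1 else 0)) + q ^ 3 * 0) := by
          gcongr
          rw [mul_zero, add_zero]
          refine le_trans ?_ (Nat.le_add_left _ 1)
          gcongr
          rcases hgen with h | h | h <;> rw [if_pos h] <;> omega
    · intro d hd hoff
      have hsub : ({j, k} : Finset ι) ⊆ T := by
        intro i
        simp only [Finset.mem_insert, Finset.mem_singleton]
        rintro (rfl | rfl) <;> assumption
      have e1 := hrow d hd _ hsub hoff j (by simp)
      have e2 := hrow d hd _ hsub hoff k (by simp)
      rw [show ({j, k} : Finset ι).erase j = {k} by grind, Finset.sum_singleton] at e1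
      rw [show ({j, k} : Finset ι).erase k = {j} by grind, Finset.sum_singleton,
        Finset.erase_right_comm] at e2
      intro i hi
      rcases Finset.mem_insert.1 hi with rfl | hi
      · simpa [hjk] using e2
      · rw [Finset.mem_singleton.1 hi]
        simpa [hjk] using e1
  · push Not at hgen
    obtain ⟨hs, ht, hu⟩ := hgen
    rw [if_neg hs, if_neg ht, if_neg hu]
    have key := card_filter_mul_pow_le P hP {a, b, c} ?_
    · rw [Finset.card_eq_three.2 ⟨a, b, c, hab, hac, hbc, rfl⟩] at key
      simpa using key
    · intro d hd hoff
      have hsub : ({a, b, c} : Finset ι) ⊆ T := by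
        intro i
        simp only [Finset.mem_insert, Finset.mem_singleton]
        rintro (rfl | rfl | rfl) <;> assumption
      have e1 := hrow d hd _ hsub hoff a (by simp)
      have e2 := hrow d hd _ hsub hoff b (by simp)
      have e3 := hrow d hd _ hsub hoff c (by simp)
      rw [show ({a, b, c} : Finset ι).erase a = {b, c} by grind, Finset.sum_pair hbc] at e1
      rw [show ({a, b, c} : Finset ι).erase b = {a, c} by grind, Finset.sum_pair hac,
        Finset.erase_right_comm (a := b) (b := a)] at e2
      rw [show ({a, b, c} : Finset ι).erase c = {a, b} by grind, Finset.sum_pair hab,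
        Finset.erase_right_comm (a := c) (b := a), Finset.erase_right_comm (a := c) (b := b)] at e3
      set s := injPermanent m C ((T.erase a).erase b)
      set t := injPermanent m C ((T.erase a).erase c)
      set u := injPermanent m C ((T.erase b).erase c)
      have hda : d a = 0 := by
        have : 2 * s * t * d a = 0 := by linear_combination t * e2 + s * e3 - u * e1
        simpa [h2, hs, ht] using this
      have hdb : d b = 0 := by simpa [hda, hu] using e3
      have hdc : d c = 0 := by simpa [hda, hu] using e2
      intro i hi
      simp only [Finset.mem_insert, Finset.mem_singleton] at hi
      rcases hi with rfl | rfl | rfl <;> assumption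

open Classical in
lemma card_maximal_succ_mul_le (h2 : (2 : F) ≠ 0) (m : ℕ) (hm : 1 ≤ m) (T : Finset ι)
    (hT : #T = m + 2)
    (hM : #{C : Fin m → ι → F | ∀ j ∈ T, ∀ k ∈ T.erase j,
        injPermanent m C ((T.erase j).erase k) = 0} * Fintype.card F ^ 3 ≤
      2 * m ^ 2 * Fintype.card F ^ (m * Fintype.card ι)) :
    #{B : Fin (m + 1) → ι → F | ∀ j ∈ T, injPermanent (m + 1) B (T.erase j) = 0} *
        Fintype.card F ^ 3 ≤
      2 * (m + 1) ^ 2 * Fintype.card F ^ ((m + 1) * Fintype.card ι) := by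
  obtain ⟨a, b, c, ha, hb, hc, hab, hac, hbc⟩ := Finset.two_lt_card_iff.1 (by omega : 2 < #T)
  have hcard : ∀ j ∈ T, ∀ k ∈ T, j ≠ k → #((T.erase j).erase k) = m := by
    intro j hj k hk hjk
    rw [Finset.card_erase_of_mem (Finset.mem_erase.2 ⟨hjk.symm, hk⟩), Finset.card_erase_of_mem hj,
      hT]
    omega
  have h1 := card_injPermanent_eq_zero_mul_le (F := F) m _ (hcard a ha b hb hab)
  have h3 := card_injPermanent_eq_zero_mul_le (F := F) m _ (hcard a ha c hc hac)
  have h4 := card_injPermanent_eq_zero_mul_le (F := F) m _ (hcard b hb c hc hbc)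
  rw [card_filter_cons, Finset.sum_mul]
  refine (Finset.sum_le_sum fun C _ =>
    card_maximal_row_mul_le h2 C T ha hb hc hab hac hbc).trans ?_
  rw [← Finset.mul_sum]
  simp only [Finset.sum_add_distrib, ← Finset.mul_sum, ← Finset.card_filter]
  simp only [Finset.sum_const, Finset.card_univ, Fintype.card_fun, Fintype.card_fin, smul_eq_mul,
    mul_one]
  set q := Fintype.card F
  calc _ ≤ q ^ Fintype.card ι * ((1 + 3 * m + 2 * m ^ 2) * q ^ (m * Fintype.card ι)) := by
        gcongr
        rw [← pow_mul, mul_comm (Fintype.card ι) m]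
        linarith
    _ ≤ q ^ Fintype.card ι * ((2 * (m + 1) ^ 2) * q ^ (m * Fintype.card ι)) := by
        gcongr
        nlinarith
    _ = _ := by ring

open Classical in
/-- The submaximal subpermanents of `m` rows inside `m + 2` columns vanish simultaneously with
probability `O(|F|⁻³)`. -/
lemma card_submaximal_mul_le (h2 : (2 : F) ≠ 0) (m : ℕ) (T : Finset ι)
    (hT : #T = m + 3) :
    #{C : Fin (m + 1) → ι → F | ∀ j ∈ T, ∀ k ∈ T.erase j,
        injPermanent (m + 1) C ((T.erase j).erase k) = 0} * Fintype.card F ^ 3 ≤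
      2 * (m + 1) ^ 2 * Fintype.card F ^ ((m + 1) * Fintype.card ι) := by
  induction m generalizing T with
  | zero =>
    rw [card_filter_cons]
    simp only [injPermanent_cons]
    simp only [injPermanent]
    have key := card_filter_mul_pow_le (F := F) (fun x : ι → F => ∀ j ∈ T, ∀ k ∈ T.erase j,
      ∑ l ∈ (T.erase j).erase k, x l * 1 = 0) ?_ T ?_
    · rw [hT] at key
      simp only [Finset.univ_unique, Finset.sum_singleton]
      calc _ ≤ Fintype.card F ^ Fintype.card ι := by
            convert key using 2
            congr!
        _ ≤ _ := by rw [zero_add, one_mul]; omega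
    · intro x y hx hy j hj k hk
      have := hx j hj k hk
      have := hy j hj k hk
      simp_all
    · intro d hd _ l hl
      obtain ⟨j, k, hjk⟩ := Finset.card_eq_two.1
        (show #(T.erase l) = 2 by rw [Finset.card_erase_of_mem hl]; omega)
      have hT' : T = {l, j, k} := by
        rw [← hjk.2, Finset.insert_erase hl]
      have hj : j ∈ T.erase l := by simp [hjk.2]
      have hk : k ∈ T.erase l := by simp [hjk.2]
      have := hd j (by grind) k (by grind)
      rw [show (T.erase j).erase k = {l} by grind] at this
      simpa using this
  | succ m ih =>
    obtain ⟨i, hi⟩ : T.Nonempty := by rw [← Finset.card_pos]; omega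
    have hTi : #(T.erase i) = m + 3 := by rw [Finset.card_erase_of_mem hi]; omega
    refine le_trans (Nat.mul_le_mul_right _ (Finset.card_le_card ?_))
      (card_maximal_succ_mul_le h2 (m + 1) (by omega) (T.erase i) hTi (ih _ hTi))
    intro C hC
    simp only [Finset.mem_filter, Finset.mem_univ, true_and] at hC ⊢
    exact hC i hi

open Classical in
lemma card_ncPermanent_eq_zero_mul_le (h2 : (2 : F) ≠ 0) (k : ℕ) :
    #{A : Matrix (Fin (k + 3)) (Fin (k + 3)) F | A.ncPermanent = 0} * Fintype.card F ^ 3 ≤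
      (Fintype.card F ^ 2 + 2 * (k + 2) ^ 2) * Fintype.card F ^ ((k + 3) * (k + 3)) := by
  have hN := card_maximal_succ_mul_le h2 (k + 1) (by omega) (univ : Finset (Fin (k + 3)))
    (by simp) (by simpa using card_submaximal_mul_le h2 k (univ : Finset (Fin (k + 3))) (by simp))
  simp only [Fintype.card_fin] at hN
  set q := Fintype.card F
  have harith : ∀ N, N * q ^ 3 ≤ 2 * (k + 1 + 1) ^ 2 * q ^ ((k + 1 + 1) * (k + 3)) →
      q ^ (k + 3) * ((q ^ (k + 3)) ^ (k + 1 + 1) * q ^ 2 + q ^ 3 * N) ≤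
        (q ^ 2 + 2 * (k + 2) ^ 2) * q ^ ((k + 3) * (k + 3)) := by
    intro N hN
    rw [mul_comm] at hN
    refine (Nat.mul_le_mul_left _ (Nat.add_le_add_left hN _)).trans_eq ?_
    ring
  have hrow : ∀ C : Fin (k + 1 + 1) → Fin (k + 3) → F,
      #{x : Fin (k + 3) → F |
        injPermanent (k + 3) (Fin.cons x C : Fin (k + 3) → Fin (k + 3) → F) univ = 0} * q ^ 3 ≤
        q ^ (k + 3) * (q ^ 2 + q ^ 3 *
          if ∀ j ∈ (univ : Finset (Fin (k + 3))), injPermanent (k + 1 + 1) C (univ.erase j) = 0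
            then 1 else 0) := by
    intro C
    split_ifs with h0
    · have := card_le_card_pow (F := F) fun x : Fin (k + 3) → F =>
        injPermanent (k + 3) (Fin.cons x C : Fin (k + 3) → Fin (k + 3) → F) univ = 0
      rw [Fintype.card_fin] at this
      calc _ ≤ q ^ (k + 3) * q ^ 3 := Nat.mul_le_mul_right _ this
        _ ≤ _ := by gcongr; omega
    · push Not at h0
      obtain ⟨j, hj, hne⟩ := h0
      have := card_injPermanent_row_mul_le C univ hj hne
      rw [Fintype.card_fin] at this
      calc _ = _ * q * q ^ 2 := by ring
        _ ≤ q ^ (k + 3) * q ^ 2 := Nat.mul_le_mul_right _ this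
        _ = _ := by ring
  simp only [ncPermanent_eq_injPermanent]
  have hcons := card_filter_cons (F := F) (ι := Fin (k + 3)) (m := k + 1 + 1)
    (fun B => injPermanent (k + 3) B univ = 0)
  refine (congrArg (· * q ^ 3) hcons).trans_le ?_
  rw [Finset.sum_mul]
  refine (Finset.sum_le_sum fun C _ => hrow C).trans ?_
  rw [← Finset.mul_sum, Finset.sum_add_distrib, ← Finset.mul_sum, ← Finset.card_filter]
  simp only [Finset.sum_const, Finset.card_univ, Fintype.card_fun, Fintype.card_fin, smul_eq_mul]
  exact harith _ (by convert hN)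

open Classical in
lemma card_det_ne_zero_mul_le (k : ℕ) :
    #{A : Matrix (Fin (k + 2)) (Fin (k + 2)) F | A.det ≠ 0} * Fintype.card F ^ 3 ≤
      (Fintype.card F - 1) * (Fintype.card F ^ 2 - 1) *
        Fintype.card F ^ ((k + 2) * (k + 2)) := by
  have hGL : #{A : Matrix (Fin (k + 2)) (Fin (k + 2)) F | A.det ≠ 0} =
      Nat.card (GL (Fin (k + 2)) F) := by
    rw [← Fintype.card_subtype, ← Nat.card_eq_fintype_card]
    refine Nat.card_congr (Equiv.symm (Equiv.ofBijective
      (fun g => ⟨g.1, (g.1.isUnit_iff_isUnit_det.1 g.isUnit).ne_zero⟩) ⟨?_, ?_⟩))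
    · intro g h hgh
      exact Units.ext (congrArg Subtype.val hgh)
    · rintro ⟨A, hA⟩
      exact ⟨Matrix.GeneralLinearGroup.mkOfDetNeZero A hA, rfl⟩
  rw [hGL, Matrix.card_GL_field, Fin.prod_univ_castSucc, Fin.prod_univ_castSucc]
  simp only [Fin.val_castSucc, Fin.val_last]
  set q := Fintype.card F
  have hprod : ∏ i : Fin k, (q ^ (k + 2) - q ^ (i : ℕ)) ≤ (q ^ (k + 2)) ^ k := by
    calc _ ≤ ∏ _i : Fin k, q ^ (k + 2) := Finset.prod_le_prod' fun _ _ => Nat.sub_le _ _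
      _ = _ := by simp
  have e1 : q ^ (k + 2) - q ^ k = q ^ k * (q ^ 2 - 1) := by
    rw [Nat.mul_sub, pow_add, mul_one]
  have e2 : q ^ (k + 2) - q ^ (k + 1) = q ^ (k + 1) * (q - 1) := by
    rw [Nat.mul_sub, ← pow_succ, mul_one]
  rw [e1, e2]
  calc _ ≤ (q ^ (k + 2)) ^ k * (q ^ k * (q ^ 2 - 1)) * (q ^ (k + 1) * (q - 1)) * q ^ 3 := by
        gcongr
    _ = _ := by ring

open Classical in
lemma card_ncPermanent_eq_zero_ne_card_ncDet_eq_zero (h2 : (2 : F) ≠ 0) (k : ℕ)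
    (hq : 2 * (k + 2) ^ 2 + 2 ≤ Fintype.card F) :
    #{A : Matrix (Fin (k + 3)) (Fin (k + 3)) F | A.ncPermanent = 0} ≠
      #{A : Matrix (Fin (k + 3)) (Fin (k + 3)) F | A.ncDet = 0} := by
  intro heq
  have hper := card_ncPermanent_eq_zero_mul_le h2 k
  have hdet := card_det_ne_zero_mul_le (F := F) (k + 1)
  have htot : #{A : Matrix (Fin (k + 3)) (Fin (k + 3)) F | A.det = 0} +
      #{A : Matrix (Fin (k + 3)) (Fin (k + 3)) F | A.det ≠ 0} =
        Fintype.card F ^ ((k + 3) * (k + 3)) := by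
    rw [Finset.card_filter_add_card_filter_not, Finset.card_univ, ← Fintype.card_congr Matrix.of]
    simp [← pow_mul]
  rw [heq] at hper
  simp only [ncDet_eq_det] at hper
  rw [show k + 1 + 2 = k + 3 from rfl] at hdet
  set q := Fintype.card F
  set Q := q ^ ((k + 3) * (k + 3))
  have hQpos : 0 < Q := by positivity
  obtain ⟨p, hp⟩ : ∃ p, q = p + 1 := ⟨q - 1, by omega⟩
  have hsum : q ^ 3 * Q ≤ (q ^ 2 + 2 * (k + 2) ^ 2 + (q - 1) * (q ^ 2 - 1)) * Q := by
    rw [← htot] at hper hdet ⊢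
    linarith
  have hle := Nat.le_of_mul_le_mul_right hsum hQpos
  have e : (q - 1) * (q ^ 2 - 1) = p * (p ^ 2 + 2 * p) := by
    rw [hp, Nat.add_sub_cancel, show (p + 1) ^ 2 = p ^ 2 + 2 * p + 1 by ring, Nat.add_sub_cancel]
  rw [e, hp] at hle
  rw [hp] at hq
  nlinarith

end Counting

/-- For `n ≥ 3` there is a bound `q₀` (depending on `n`) such that for every finite ring
`R` without zero divisors, with at least `q₀` elements and characteristic different
from `2`, no bijective map `Φ : Mₙ(R) → Mₙ(R)` satisfies `per A = det (Φ A)` for all `A`. -/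
theorem no_bijective_permanent_to_determinant_converter_ring (n : ℕ) (hn : 3 ≤ n) :
    ∃ q₀ : ℕ, ∀ (R : Type) [Ring R] [NoZeroDivisors R] [Fintype R],
      q₀ ≤ Fintype.card R → ringChar R ≠ 2 →
      ¬ ∃ Φ : Matrix (Fin n) (Fin n) R → Matrix (Fin n) (Fin n) R,
          Function.Bijective Φ ∧ ∀ A, A.ncPermanent = (Φ A).ncDet := by
  classical
  obtain ⟨k, rfl⟩ := Nat.exists_eq_add_of_le' hn
  refine ⟨2 * (k + 2) ^ 2 + 2, fun R _ _ _ hq hchar => ?_⟩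
  rintro ⟨Φ, hΦ, h⟩
  have : Nontrivial R := Fintype.one_lt_card_iff_nontrivial.1 (by omega)
  have : IsDomain R := NoZeroDivisors.to_isDomain R
  let : Field R := (Finite.isDomain_to_isField R).toField
  refine card_ncPermanent_eq_zero_ne_card_ncDet_eq_zero (F := R) (Ring.two_ne_zero hchar) k hq ?_
  refine Finset.card_bij (fun A _ => Φ A) ?_ (fun A _ B _ hAB => hΦ.1 hAB) ?_
  · intro A hA
    simp only [Finset.mem_filter, Finset.mem_univ, true_and] at hA ⊢
    exact (h A).symm.trans hA
  · intro B hB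
    obtain ⟨A, rfl⟩ := hΦ.2 B
    simp only [Finset.mem_filter, Finset.mem_univ, true_and] at hB
    exact ⟨A, by simpa using (h A).trans hB, rfl⟩
end

section
/- Let n ≥ 3. There exists a bound q₀ (depending on n) such that for every finite field F with |F| ≥ q₀ and char F ≠ 2, there is no bijective map Ψ : M_n(F) → M_n(F) satisfying per Ψ(A) = det A for all A ∈ M_n(F). -/
open Finset

namespace Matrix

section Laplace

variable {R : Type*}

/-- Laplace expansion of the permanent along the top row. -/
theorem permanent_succ_row_zero [CommSemiring R] {k : ℕ}
    (A : Matrix (Fin (k + 1)) (Fin (k + 1)) R) :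
    A.permanent = ∑ j, A 0 j * (A.submatrix Fin.succ j.succAbove).permanent := by
  rw [← permanent_transpose, permanent, Finset.univ_perm_fin_succ, ← Finset.univ_product_univ,
    Finset.sum_map, Finset.sum_product]
  refine Finset.sum_congr rfl fun j _ => ?_
  rw [← permanent_transpose (A.submatrix _ _), permanent, Finset.mul_sum]
  refine Fin.cases ?_ (fun i => ?_) j
  · simp [Fin.prod_univ_succ]
  · refine Fintype.sum_equiv (Equiv.mulLeft i.cycleRange) _ _ fun σ => ?_
    simp [Fin.prod_univ_succ, Fin.succAbove_cycleRange]

/-- The matrix with top row `x` above the rows of `B`. -/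
def consRow {ι : Type*} {k : ℕ} (x : ι → R) (B : Matrix (Fin k) ι R) : Matrix (Fin (k + 1)) ι R :=
  of (Fin.cons x B)

/-- The permanent of the square matrix formed by the columns of `B` listed by `e`. -/
def colPermanent [CommSemiring R] {ι : Type*} {k : ℕ} (B : Matrix (Fin k) ι R) (e : Fin k → ι) :
    R :=
  (B.submatrix id e).permanent

theorem colPermanent_cons [CommSemiring R] {ι : Type*} {k : ℕ} (x : ι → R) (B : Matrix (Fin k) ι R)
    (e : Fin (k + 1) → ι) :
    colPermanent (consRow x B) e =
      ∑ j, x (e j) * colPermanent B (e ∘ j.succAbove) :=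
  permanent_succ_row_zero _

theorem colPermanent_cons_sub [CommRing R] {ι : Type*} {k : ℕ} (x y : ι → R)
    (B : Matrix (Fin k) ι R) (e : Fin (k + 1) → ι) :
    colPermanent (consRow (x - y) B) e =
      colPermanent (consRow x B) e - colPermanent (consRow y B) e := by
  simp [colPermanent_cons, sub_mul]

/-- Two columns may be deleted in either order. -/
theorem colPermanent_delete_two_comm [CommSemiring R] {ι : Type*} {k : ℕ} (B : Matrix (Fin k) ι R)
    (e : Fin (k + 2) → ι) (j : Fin (k + 2)) (c : Fin (k + 1)) :
    colPermanent B ((e ∘ (j.succAbove c).succAbove) ∘ (c.predAbove j).succAbove) =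
      colPermanent B ((e ∘ j.succAbove) ∘ c.succAbove) := by
  congr 1
  funext i
  simp [Fin.succAbove_succAbove_succAbove_predAbove]

end Laplace

section Vanishing

variable {R F : Type*} [Field F] {ι : Type*}

/-- All maximal subpermanents of `B` in the columns listed by `e` vanish. -/
def SubpermanentsVanish [CommSemiring R] {k : ℕ} (e : Fin (k + 1) → ι)
    (B : Matrix (Fin k) ι R) : Prop :=
  ∀ j : Fin (k + 1), colPermanent B (e ∘ j.succAbove) = 0

/-- All subpermanents of `B` vanish after deleting any two of the columns listed by `e`. -/
def DeleteTwoSubpermanentsVanish [CommSemiring R] {k : ℕ}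
    (e : Fin (k + 2) → ι) (B : Matrix (Fin k) ι R) : Prop :=
  ∀ j : Fin (k + 2), SubpermanentsVanish (e ∘ j.succAbove) B

/-- The row `x`, placed on top of `B`, makes all maximal subpermanents in the columns
listed by `e` vanish. -/
def IsBadRow [CommSemiring R] {k : ℕ} (e : Fin (k + 2) → ι)
    (B : Matrix (Fin k) ι R) (x : ι → R) : Prop :=
  SubpermanentsVanish e (consRow x B)

theorem IsBadRow.sub {k : ℕ} {e : Fin (k + 2) → ι} {B : Matrix (Fin k) ι F} (x y : ι → F)
    (hx : IsBadRow e B x) (hy : IsBadRow e B y) : IsBadRow e B (x - y) := fun j => by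
  rw [colPermanent_cons_sub, hx j, hy j, sub_zero]

theorem IsBadRow.eq_zero_of_ne_zero {k : ℕ} {e : Fin (k + 2) → ι} (he : e.Injective)
    {B : Matrix (Fin k) ι F} {d : ι → F} (hd : IsBadRow e B d) {j : Fin (k + 2)} {c : Fin (k + 1)}
    (h : colPermanent B ((e ∘ j.succAbove) ∘ c.succAbove) ≠ 0)
    (off : ∀ i, i ≠ e j → i ≠ e (j.succAbove c) → d i = 0) : d (e (j.succAbove c)) = 0 := by
  have hj := hd j
  rw [colPermanent_cons, Finset.sum_eq_single c] at hj
  · exact (mul_eq_zero.1 hj).resolve_right h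
  · intro b _ hb
    rw [Function.comp_apply, off, zero_mul]
    · exact fun H => Fin.succAbove_ne j b (he H)
    · exact fun H => hb (Fin.succAbove_right_injective (he H))
  · simp

theorem IsBadRow.add_eq_zero {k : ℕ} {e : Fin (k + 2) → ι}
    {B : Matrix (Fin k) ι F} {d : ι → F} (hd : IsBadRow e B d) (j : Fin (k + 2))
    {c₁ c₂ : Fin (k + 1)} (hc : c₁ ≠ c₂)
    (off : ∀ i, i ≠ j → i ≠ j.succAbove c₁ → i ≠ j.succAbove c₂ → d (e i) = 0) :
    d (e (j.succAbove c₁)) * colPermanent B ((e ∘ j.succAbove) ∘ c₁.succAbove) +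
      d (e (j.succAbove c₂)) * colPermanent B ((e ∘ j.succAbove) ∘ c₂.succAbove) = 0 := by
  have hj := hd j
  rw [colPermanent_cons, Fintype.sum_eq_add c₁ c₂ hc] at hj
  · exact hj
  · rintro b ⟨h₁, h₂⟩
    rw [Function.comp_apply, off _ (Fin.succAbove_ne j b), zero_mul]
    · exact fun H => h₁ (Fin.succAbove_right_injective H)
    · exact fun H => h₂ (Fin.succAbove_right_injective H)

theorem IsBadRow.eq_zero_of_three_ne_zero (h2 : (2 : F) ≠ 0) {k : ℕ} {e : Fin (k + 3) → ι}
    {B : Matrix (Fin (k + 1)) ι F} {d : ι → F} (hd : IsBadRow e B d)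
    (h₀₁ : colPermanent B ((e ∘ (0 : Fin (k + 3)).succAbove) ∘ (0 : Fin (k + 2)).succAbove) ≠ 0)
    (h₀₂ : colPermanent B ((e ∘ (0 : Fin (k + 3)).succAbove) ∘ (1 : Fin (k + 2)).succAbove) ≠ 0)
    (h₁₂ : colPermanent B ((e ∘ (1 : Fin (k + 3)).succAbove) ∘ (1 : Fin (k + 2)).succAbove) ≠ 0)
    (off : ∀ i, i ≠ 0 → i ≠ 1 → i ≠ 2 → d (e i) = 0) :
    d (e 0) = 0 ∧ d (e 1) = 0 ∧ d (e 2) = 0 := by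
  have a₀₀ : (0 : Fin (k + 3)).succAbove (0 : Fin (k + 2)) = 1 := rfl
  have a₀₁ : (0 : Fin (k + 3)).succAbove (1 : Fin (k + 2)) = 2 := rfl
  have a₁₀ : (1 : Fin (k + 3)).succAbove (0 : Fin (k + 2)) = 0 := rfl
  have a₁₁ : (1 : Fin (k + 3)).succAbove (1 : Fin (k + 2)) = 2 := rfl
  have a₂₀ : (2 : Fin (k + 3)).succAbove (0 : Fin (k + 2)) = 0 := rfl
  have a₂₁ : (2 : Fin (k + 3)).succAbove (1 : Fin (k + 2)) = 1 := rfl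
  have p₀₀ : (0 : Fin (k + 2)).predAbove (0 : Fin (k + 3)) = 0 := rfl
  have p₁₀ : (1 : Fin (k + 2)).predAbove (0 : Fin (k + 3)) = 0 := rfl
  have p₁₁ : (1 : Fin (k + 2)).predAbove (1 : Fin (k + 3)) = 1 := rfl
  have s₁₀ := colPermanent_delete_two_comm B e 0 0
  have s₂₀ := colPermanent_delete_two_comm B e 0 1
  have s₂₁ := colPermanent_delete_two_comm B e 1 1
  rw [a₀₀, p₀₀] at s₁₀
  rw [a₀₁, p₁₀] at s₂₀
  rw [a₁₁, p₁₁] at s₂₁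
  have e₀ := hd.add_eq_zero 0 (zero_ne_one (α := Fin (k + 2))) fun i h₁ h₂ h₃ => off i h₁ h₂ h₃
  have e₁ := hd.add_eq_zero 1 (zero_ne_one (α := Fin (k + 2))) fun i h₁ h₂ h₃ => off i h₂ h₁ h₃
  have e₂ := hd.add_eq_zero 2 (zero_ne_one (α := Fin (k + 2))) fun i h₁ h₂ h₃ => off i h₂ h₃ h₁
  rw [a₀₀, a₀₁] at e₀
  rw [a₁₀, a₁₁, s₁₀] at e₁
  rw [a₂₀, a₂₁, s₂₀, s₂₁] at e₂
  generalize colPermanent B ((e ∘ (0 : Fin (k + 3)).succAbove) ∘ (0 : Fin (k + 2)).succAbove) =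
    u at *
  generalize colPermanent B ((e ∘ (0 : Fin (k + 3)).succAbove) ∘ (1 : Fin (k + 2)).succAbove) =
    v at *
  generalize colPermanent B ((e ∘ (1 : Fin (k + 3)).succAbove) ∘ (1 : Fin (k + 2)).succAbove) =
    w at *
  have z₀ : d (e 0) = 0 := by
    have : 2 * u * v * d (e 0) = 0 := by linear_combination v * e₁ + u * e₂ - w * e₀
    simpa [h2, h₀₁, h₀₂] using this
  rw [z₀] at e₁ e₂
  exact ⟨z₀, by simpa [h₁₂] using e₂, by simpa [h₁₂] using e₁⟩

end Vanishing

section Cardinality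

variable {F : Type*} [Fintype F] {ι : Type*} [Fintype ι] [DecidableEq ι]

theorem card_filter_cons {k : ℕ} (P : Matrix (Fin (k + 1)) ι F → Prop)
    [DecidablePred P] :
    #{B | P B} = ∑ B : Matrix (Fin k) ι F, #{x : ι → F | P (consRow x B)} := by
  rw [← Finset.card_sigma]
  refine Finset.card_bij' (fun B _ => ⟨of (Fin.tail B), B 0⟩)
    (fun p _ => consRow p.2 p.1) ?_ ?_ ?_ ?_
  · intro B hB
    exact mem_sigma.2 ⟨mem_univ _, mem_filter.2 ⟨mem_univ _,
      (congrArg P (Fin.cons_self_tail B)).mpr (mem_filter.1 hB).2⟩⟩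
  · intro p hp
    exact mem_filter.2 ⟨mem_univ _, (mem_filter.1 (mem_sigma.1 hp).2).2⟩
  · intro B _
    exact Fin.cons_self_tail B
  · intro p _
    rfl

theorem card_matrix (k : ℕ) :
    Fintype.card (Matrix (Fin k) ι F) = (Fintype.card F ^ Fintype.card ι) ^ k := by
  rw [← Nat.card_eq_fintype_card]
  simp [Matrix]

theorem card_filter_le_pow (P : (ι → F) → Prop) [DecidablePred P] :
    #{x | P x} ≤ Fintype.card F ^ Fintype.card ι := by
  simpa using card_le_univ ({x | P x} : Finset (ι → F))

end Cardinality

section Counting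

variable {F : Type*} [Field F] [Fintype F] {ι : Type*} [Fintype ι] [DecidableEq ι]

/-- If the members of an additively closed set of vectors are determined by their
coordinates off `T`, then the set has codimension at least `#T`. -/
theorem card_filter_mul_pow_le (P : (ι → F) → Prop) [DecidablePred P] (T : Finset ι)
    (hsub : ∀ x y, P x → P y → P (x - y))
    (hzero : ∀ d, P d → (∀ i ∉ T, d i = 0) → ∀ i ∈ T, d i = 0) :
    #{x | P x} * Fintype.card F ^ #T ≤ Fintype.card F ^ Fintype.card ι := by
  have h : #{x | P x} ≤ Fintype.card ({i // i ∉ T} → F) := by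
    rw [← Finset.card_univ]
    refine Finset.card_le_card_of_injOn (fun x i => x i) (by simp) ?_
    intro x hx y hy hxy
    simp only [coe_filter, mem_univ, true_and, Set.mem_ofPred_eq] at hx hy
    have off : ∀ i ∉ T, (x - y) i = 0 := fun i hi => by
      simpa [sub_eq_zero] using congrFun hxy ⟨i, hi⟩
    have on := hzero _ (hsub x y hx hy) off
    funext i
    by_cases hi : i ∈ T
    · simpa [sub_eq_zero] using on i hi
    · simpa [sub_eq_zero] using off i hi
  rw [Fintype.card_fun, Fintype.card_subtype_compl, Fintype.card_coe] at h
  calc _ ≤ Fintype.card F ^ (Fintype.card ι - #T) * Fintype.card F ^ #T := by gcongr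
    _ = _ := by rw [← pow_add, Nat.sub_add_cancel (card_le_univ T)]

open Classical in
/-- Permanents vanish with probability at most `k / q`. -/
theorem card_colPermanent_eq_zero_mul_le {k : ℕ} (e : Fin k → ι) (he : e.Injective) :
    #{B : Matrix (Fin k) ι F | colPermanent B e = 0} * Fintype.card F ≤
      k * (Fintype.card F ^ Fintype.card ι) ^ k := by
  induction k with
  | zero => simp [colPermanent, permanent_isEmpty]
  | succ k ih =>
    set Q := Fintype.card F ^ Fintype.card ι
    have fiber : ∀ B : Matrix (Fin k) ι F,
        #{x : ι → F | colPermanent (consRow x B) e = 0} * Fintype.card F ≤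
          Q + (if colPermanent B (e ∘ Fin.succ) = 0 then 1 else 0) * (Q * Fintype.card F) := by
      intro B
      split_ifs with h
      · have := Nat.mul_le_mul_right (Fintype.card F) (card_filter_le_pow
          fun x : ι → F => colPermanent (consRow x B) e = 0)
        lia
      · have := card_filter_mul_pow_le
          (fun x : ι → F => colPermanent (consRow x B) e = 0) {e 0}
          (fun x y hx hy => by rw [colPermanent_cons_sub, hx, hy, sub_zero]) ?_
        · simpa using this
        · intro d hd off i hi
          rw [colPermanent_cons, Finset.sum_eq_single 0] at hd
          · rw [mem_singleton.1 hi]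
            exact (mul_eq_zero.1 hd).resolve_right (by simpa [Fin.succAbove_zero] using h)
          · intro j _ hj
            rw [off _ (by simpa using fun H => hj (he H)), zero_mul]
          · simp
    rw [card_filter_cons, Finset.sum_mul]
    refine (Finset.sum_le_sum fun B _ => fiber B).trans ?_
    rw [Finset.sum_add_distrib, ← Finset.sum_mul, Finset.sum_const, card_univ, card_matrix,
      ← Finset.card_filter, smul_eq_mul]
    have := ih (e ∘ Fin.succ) (he.comp (Fin.succ_injective k))
    calc _ = Q ^ (k + 1) + Q * (#{B : Matrix (Fin k) ι F | colPermanent B (e ∘ Fin.succ) = 0} *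
          Fintype.card F) := by ring
      _ ≤ Q ^ (k + 1) + Q * (k * Q ^ k) := by gcongr
      _ = _ := by ring

open Classical in
theorem card_isBadRow_mul_sq_le {k : ℕ} {e : Fin (k + 2) → ι} (he : e.Injective)
    {B : Matrix (Fin k) ι F} {j : Fin (k + 2)} {c : Fin (k + 1)}
    (h : colPermanent B ((e ∘ j.succAbove) ∘ c.succAbove) ≠ 0) :
    #{x | IsBadRow e B x} * Fintype.card F ^ 2 ≤ Fintype.card F ^ Fintype.card ι := by
  have hne : e j ≠ e (j.succAbove c) := fun H => Fin.succAbove_ne j c (he H).symm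
  rw [← Finset.card_pair hne]
  refine card_filter_mul_pow_le _ _ IsBadRow.sub fun d hd off i hi => ?_
  have off' : ∀ i, i ≠ e j → i ≠ e (j.succAbove c) → d i = 0 := fun i h₁ h₂ =>
    off i (by simp [h₁, h₂])
  rcases mem_insert.1 hi with rfl | hi
  · have := hd.eq_zero_of_ne_zero he (j := j.succAbove c) (c := c.predAbove j)
      (by rwa [colPermanent_delete_two_comm])
      (by simpa only [Fin.succAbove_succAbove_predAbove] using fun i h₁ h₂ => off' i h₂ h₁)
    rwa [Fin.succAbove_succAbove_predAbove] at this
  · rw [mem_singleton.1 hi]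
    exact hd.eq_zero_of_ne_zero he h off'

open Classical in
theorem card_isBadRow_mul_cube_le (h2 : (2 : F) ≠ 0) {k : ℕ} {e : Fin (k + 3) → ι}
    (he : e.Injective) {B : Matrix (Fin (k + 1)) ι F}
    (h₀₁ : colPermanent B ((e ∘ (0 : Fin (k + 3)).succAbove) ∘ (0 : Fin (k + 2)).succAbove) ≠ 0)
    (h₀₂ : colPermanent B ((e ∘ (0 : Fin (k + 3)).succAbove) ∘ (1 : Fin (k + 2)).succAbove) ≠ 0)
    (h₁₂ : colPermanent B ((e ∘ (1 : Fin (k + 3)).succAbove) ∘ (1 : Fin (k + 2)).succAbove) ≠ 0) :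
    #{x | IsBadRow e B x} * Fintype.card F ^ 3 ≤ Fintype.card F ^ Fintype.card ι := by
  have hcard : #{e 0, e 1, e 2} = 3 := by
    rw [Finset.card_eq_three]
    refine ⟨_, _, _, he.ne ?_, he.ne ?_, he.ne ?_, rfl⟩ <;>
      simp [Fin.ext_iff, Nat.mod_eq_of_lt (show 2 < k + 3 by lia)]
  rw [← hcard]
  refine card_filter_mul_pow_le _ _ IsBadRow.sub fun d hd off => ?_
  obtain ⟨z₀, z₁, z₂⟩ := hd.eq_zero_of_three_ne_zero h2 h₀₁ h₀₂ h₁₂ fun i n₀ n₁ n₂ =>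
    off _ (by simp [he.eq_iff, n₀, n₁, n₂])
  simp [z₀, z₁, z₂]

open Classical in
theorem card_deleteTwoSubpermanentsVanish_one_mul_le (e : Fin 3 → ι) (he : e.Injective) :
    #{B : Matrix (Fin 1) ι F | DeleteTwoSubpermanentsVanish e B} * Fintype.card F ^ 3 ≤
      Fintype.card F ^ Fintype.card ι := by
  have hcard : #{e 0, e 1, e 2} = 3 := by
    rw [Finset.card_eq_three]
    refine ⟨_, _, _, he.ne ?_, he.ne ?_, he.ne ?_, rfl⟩ <;> decide
  rw [card_filter_cons, Finset.sum_eq_single 0 (fun B _ hB => absurd (Subsingleton.elim _ _) hB)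
    (by simp), ← hcard]
  have key : ∀ (B : Matrix (Fin 0) ι F) (x : ι → F) (f : Fin 1 → ι),
      colPermanent (consRow x B) f = x (f 0) := fun B x f => by
    rw [colPermanent_cons, Fin.sum_univ_one, colPermanent, permanent_isEmpty, mul_one]
  refine card_filter_mul_pow_le (fun x => DeleteTwoSubpermanentsVanish e (consRow x 0)) _
    (fun x y hx hy j c => by rw [colPermanent_cons_sub, hx j c, hy j c, sub_zero]) fun d hd _ => ?_
  have h₀ := (key _ _ _).symm.trans (hd 1 1)
  have h₁ := (key _ _ _).symm.trans (hd 0 1)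
  have h₂ := (key _ _ _).symm.trans (hd 0 0)
  intro i hi
  simp only [mem_insert, mem_singleton] at hi
  rcases hi with rfl | rfl | rfl
  exacts [h₀, h₁, h₂]

open Classical in
/-- Simultaneous vanishing of all maximal subpermanents is a condition of codimension three. -/
theorem exists_card_subpermanentsVanish_mul_le (k : ℕ) :
    ∃ C : ℕ, ∀ (F : Type) [Field F] [Fintype F] (ι : Type) [Fintype ι] [DecidableEq ι]
      (e : Fin (k + 3) → ι), (2 : F) ≠ 0 → e.Injective →
      #{B : Matrix (Fin (k + 2)) ι F | SubpermanentsVanish e B} * Fintype.card F ^ 3 ≤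
        C * (Fintype.card F ^ Fintype.card ι) ^ (k + 2) := by
  have hdel : ∃ C : ℕ, ∀ (F : Type) [Field F] [Fintype F] (ι : Type) [Fintype ι] [DecidableEq ι]
      (e : Fin (k + 3) → ι), (2 : F) ≠ 0 → e.Injective →
      #{B : Matrix (Fin (k + 1)) ι F | DeleteTwoSubpermanentsVanish e B} * Fintype.card F ^ 3 ≤
        C * (Fintype.card F ^ Fintype.card ι) ^ (k + 1) := by
    cases k with
    | zero =>
      refine ⟨1, fun F _ _ ι _ _ e _ he => ?_⟩
      simpa using card_deleteTwoSubpermanentsVanish_one_mul_le e he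
    | succ k =>
      obtain ⟨C, hC⟩ := exists_card_subpermanentsVanish_mul_le k
      refine ⟨C, fun F _ _ ι _ _ e h2 he => le_trans (Nat.mul_le_mul_right _ ?_)
        (hC F ι (e ∘ Fin.succ) h2 (he.comp (Fin.succ_injective _)))⟩
      refine Finset.card_le_card fun B hB => ?_
      simp only [mem_filter, mem_univ, true_and] at hB ⊢
      exact hB 0
  obtain ⟨C, hC⟩ := hdel
  refine ⟨1 + 3 * (k + 1) + C, fun F _ _ ι _ _ e h2 he => ?_⟩
  set q := Fintype.card F
  set Q := q ^ Fintype.card ι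
  let v (j : Fin (k + 3)) (c : Fin (k + 2)) (B : Matrix (Fin (k + 1)) ι F) : ℕ :=
    if colPermanent B ((e ∘ j.succAbove) ∘ c.succAbove) = 0 then 1 else 0
  have hv : ∀ j c, (∑ B, v j c B) * q ≤ (k + 1) * Q ^ (k + 1) := fun j c => by
    rw [← Finset.card_filter]
    exact_mod_cast card_colPermanent_eq_zero_mul_le (F := F) _
      ((he.comp Fin.succAbove_right_injective).comp Fin.succAbove_right_injective)
  have fiber : ∀ B : Matrix (Fin (k + 1)) ι F, #{x | IsBadRow e B x} * q ^ 3 ≤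
      Q + (v 0 0 B + v 0 1 B + v 1 1 B) * (Q * q) +
        (if DeleteTwoSubpermanentsVanish e B then 1 else 0) * (Q * q ^ 3) := by
    intro B
    by_cases hB : DeleteTwoSubpermanentsVanish e B
    · rw [if_pos hB, one_mul]
      exact (Nat.mul_le_mul_right _ (card_filter_le_pow _)).trans (Nat.le_add_left _ _)
    · rw [if_neg hB, zero_mul, add_zero]
      by_cases h₀₁ : colPermanent B ((e ∘ (0 : Fin (k + 3)).succAbove) ∘
          (0 : Fin (k + 2)).succAbove) ≠ 0 ∧
        colPermanent B ((e ∘ (0 : Fin (k + 3)).succAbove) ∘ (1 : Fin (k + 2)).succAbove) ≠ 0 ∧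
        colPermanent B ((e ∘ (1 : Fin (k + 3)).succAbove) ∘ (1 : Fin (k + 2)).succAbove) ≠ 0
      · obtain ⟨h₀₁, h₀₂, h₁₂⟩ := h₀₁
        exact (card_isBadRow_mul_cube_le h2 he h₀₁ h₀₂ h₁₂).trans
          (Nat.le_add_right _ _)
      · have hone : 1 ≤ v 0 0 B + v 0 1 B + v 1 1 B := by
          by_contra hlt
          refine h₀₁ ⟨fun h => ?_, fun h => ?_, fun h => ?_⟩
          · have : v 0 0 B = 1 := if_pos h
            lia
          · have : v 0 1 B = 1 := if_pos h
            lia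
          · have : v 1 1 B = 1 := if_pos h
            lia
        simp only [DeleteTwoSubpermanentsVanish, SubpermanentsVanish, not_forall] at hB
        obtain ⟨j, c, h⟩ := hB
        calc _ = #{x | IsBadRow e B x} * q ^ 2 * q := by ring
          _ ≤ Q * q := Nat.mul_le_mul_right _ (card_isBadRow_mul_sq_le he h)
          _ ≤ (v 0 0 B + v 0 1 B + v 1 1 B) * (Q * q) := Nat.le_mul_of_pos_left _ hone
          _ ≤ _ := Nat.le_add_left _ _
  rw [card_filter_cons, Finset.sum_mul]
  refine (Finset.sum_le_sum fun B _ => fiber B).trans ?_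
  simp only [Finset.sum_add_distrib, ← Finset.sum_mul, Finset.sum_const, card_univ, card_matrix,
    ← Finset.card_filter _ univ, smul_eq_mul]
  have h₀₁ := Nat.mul_le_mul_left Q (hv 0 0)
  have h₀₂ := Nat.mul_le_mul_left Q (hv 0 1)
  have h₁₂ := Nat.mul_le_mul_left Q (hv 1 1)
  have hdel := Nat.mul_le_mul_left Q (hC F ι e h2 he)
  simp only [show Fintype.card F = q from rfl, show q ^ Fintype.card ι = Q from rfl] at hdel ⊢
  refine le_trans (le_of_eq ?_) ((add_le_add (add_le_add (add_le_add (add_le_add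
    (le_refl (Q * Q ^ (k + 1))) h₀₁) h₀₂) h₁₂) hdel).trans (le_of_eq ?_)) <;> ring

open Classical in
/-- The permanent vanishes with probability at most `1 / q + O(1 / q ^ 3)`. -/
theorem exists_card_permanent_eq_zero_mul_le (k : ℕ) :
    ∃ C : ℕ, ∀ (F : Type) [Field F] [Fintype F], (2 : F) ≠ 0 →
      #{A : Matrix (Fin (k + 3)) (Fin (k + 3)) F | A.permanent = 0} * Fintype.card F ^ 3 ≤
        (Fintype.card F ^ 2 + C) * (Fintype.card F ^ (k + 3)) ^ (k + 3) := by
  obtain ⟨C, hC⟩ := exists_card_subpermanentsVanish_mul_le k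
  refine ⟨C, fun F _ _ h2 => ?_⟩
  have := hC F (Fin (k + 3)) id h2 Function.injective_id
  set q := Fintype.card F
  rw [Fintype.card_fin] at this
  set Q := q ^ (k + 3) with hQ
  have fiber : ∀ B : Matrix (Fin (k + 2)) (Fin (k + 3)) F,
      #{x | (consRow x B).permanent = 0} * q ^ 3 ≤
        Q * q ^ 2 + (if SubpermanentsVanish id B then 1 else 0) * (Q * q ^ 3) := by
    intro B
    by_cases hB : SubpermanentsVanish id B
    · rw [if_pos hB, one_mul]
      refine (Nat.mul_le_mul_right _ (card_filter_le_pow _)).trans ?_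
      simp [hQ, q]
    · rw [if_neg hB, zero_mul, add_zero]
      simp only [SubpermanentsVanish, not_forall] at hB
      obtain ⟨j, hj⟩ := hB
      have hexp : ∀ x, (consRow x B).permanent =
        ∑ i, x i * colPermanent B (id ∘ i.succAbove) := fun x => colPermanent_cons x B id
      have := card_filter_mul_pow_le
        (fun x => (consRow x B).permanent = 0) {j}
        (fun x y hx hy => (colPermanent_cons_sub x y B id).trans (by
          rw [colPermanent, colPermanent, submatrix_id_id, submatrix_id_id, hx, hy, sub_zero])) ?_
      · rw [card_singleton, pow_one, Fintype.card_fin] at this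
        calc _ = _ * q * q ^ 2 := by ring
          _ ≤ _ := Nat.mul_le_mul_right _ this
      · intro d hd off i hi
        rw [hexp, Finset.sum_eq_single j] at hd
        · rw [mem_singleton.1 hi]
          exact (mul_eq_zero.1 hd).resolve_right hj
        · intro i _ hi
          rw [off i (by simpa using hi), zero_mul]
        · simp
  rw [card_filter_cons, Finset.sum_mul]
  refine (Finset.sum_le_sum fun B _ => fiber B).trans ?_
  simp only [Finset.sum_add_distrib, ← Finset.sum_mul, Finset.sum_const, card_univ, card_matrix,
    ← Finset.card_filter _ univ, smul_eq_mul, Fintype.card_fin]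
  have := Nat.mul_le_mul_left Q this
  simp only [show Fintype.card F = q from rfl, show q ^ (k + 3) = Q from rfl]
  refine le_trans (le_of_eq ?_) ((add_le_add (le_refl (q ^ 2 * Q ^ (k + 3))) this).trans
    (le_of_eq ?_)) <;> ring

open Classical in
/-- The determinant is nonzero with probability at most `(1 - 1 / q) * (1 - 1 / q ^ 2)`. -/
theorem card_det_ne_zero_mul_le (k : ℕ) (F : Type) [Field F] [Fintype F] :
    #{A : Matrix (Fin (k + 2)) (Fin (k + 2)) F | A.det ≠ 0} * Fintype.card F ^ 3 ≤
      (Fintype.card F - 1) * (Fintype.card F ^ 2 - 1) *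
        (Fintype.card F ^ (k + 2)) ^ (k + 2) := by
  have hGL : #{A : Matrix (Fin (k + 2)) (Fin (k + 2)) F | A.det ≠ 0} =
      Nat.card (GL (Fin (k + 2)) F) := by
    rw [← Fintype.card_subtype, ← Nat.card_eq_fintype_card]
    refine Nat.card_congr (Equiv.symm ?_)
    refine Equiv.ofBijective (fun g => ⟨g.1, g.det_ne_zero⟩) ⟨fun g h hgh => ?_, fun A => ?_⟩
    · exact Units.ext (congrArg Subtype.val hgh)
    · exact ⟨GeneralLinearGroup.mkOfDetNeZero A.1 A.2, rfl⟩
  rw [hGL, card_GL_field, Fin.prod_univ_castSucc, Fin.prod_univ_castSucc]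
  set q := Fintype.card F
  have hprod : ∏ i : Fin k, (q ^ (k + 2) - q ^ (i.castSucc.castSucc : ℕ)) ≤ (q ^ (k + 2)) ^ k := by
    refine (Finset.prod_le_pow_card _ _ _ fun i _ => Nat.sub_le _ _).trans ?_
    simp
  have h₁ : (q ^ (k + 2) - q ^ k) = q ^ k * (q ^ 2 - 1) := by
    rw [Nat.mul_sub, ← pow_add, mul_one]
  have h₂ : (q ^ (k + 2) - q ^ (k + 1)) = q ^ (k + 1) * (q - 1) := by
    rw [Nat.mul_sub, ← pow_succ, mul_one]
  simp only [Fin.val_last, Fin.val_castSucc] at hprod ⊢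
  rw [h₁, h₂]
  calc _ = (∏ i : Fin k, (q ^ (k + 2) - q ^ (i : ℕ))) *
        ((q - 1) * (q ^ 2 - 1) * (q ^ (k + 2)) ^ 2) := by ring
    _ ≤ (q ^ (k + 2)) ^ k * ((q - 1) * (q ^ 2 - 1) * (q ^ (k + 2)) ^ 2) := by gcongr
    _ = _ := by ring

end Counting

end Matrix


/-- For `n ≥ 3` there is a bound `q₀` (depending on `n`) such that for every finite field
`F` with at least `q₀` elements and characteristic different from `2`, no bijective map
`Ψ : Mₙ(F) → Mₙ(F)` satisfies `per (Ψ A) = det A` for all `A`. -/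
theorem no_bijective_determinant_to_permanent_converter (n : ℕ) (hn : 3 ≤ n) :
    ∃ q₀ : ℕ, ∀ (F : Type) [Field F] [Fintype F],
      q₀ ≤ Fintype.card F → ringChar F ≠ 2 →
      ¬ ∃ Ψ : Matrix (Fin n) (Fin n) F → Matrix (Fin n) (Fin n) F,
          Function.Bijective Ψ ∧ ∀ A, (Ψ A).permanent = A.det := by
  classical
  obtain ⟨k, rfl⟩ := Nat.exists_eq_add_of_le' hn
  obtain ⟨C, hC⟩ := Matrix.exists_card_permanent_eq_zero_mul_le k
  refine ⟨C + 2, fun F _ _ hq hchar ⟨Ψ, hΨ, h⟩ => ?_⟩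
  have hper := hC F (Ring.two_ne_zero hchar)
  have hdet := Matrix.card_det_ne_zero_mul_le (k + 1) F
  have hcard : #{A : Matrix (Fin (k + 3)) (Fin (k + 3)) F | A.permanent = 0} =
      #{A : Matrix (Fin (k + 3)) (Fin (k + 3)) F | A.det = 0} :=
    (Finset.card_bijective Ψ hΨ fun A => by simp [h]).symm
  have hsum := Finset.card_filter_add_card_filter_not (s := univ)
    (fun A : Matrix (Fin (k + 3)) (Fin (k + 3)) F => A.det = 0)
  rw [card_univ, Matrix.card_matrix, Fintype.card_fin, ← hcard] at hsum
  obtain ⟨r, hr⟩ := Nat.exists_eq_add_of_le' (show 1 ≤ Fintype.card F by lia)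
  rw [show k + 1 + 2 = k + 3 from rfl] at hdet
  have hN : 0 < (Fintype.card F ^ (k + 3)) ^ (k + 3) := by positivity
  generalize (Fintype.card F ^ (k + 3)) ^ (k + 3) = N at *
  have hpoly : Fintype.card F ^ 2 + C + (Fintype.card F - 1) * (Fintype.card F ^ 2 - 1) <
      Fintype.card F ^ 3 := by
    rw [hr] at hq ⊢
    have : (r + 1) ^ 2 - 1 = r ^ 2 + 2 * r := by
      rw [show (r + 1) ^ 2 = r ^ 2 + 2 * r + 1 by ring, Nat.add_sub_cancel]
    rw [this, Nat.add_sub_cancel]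
    nlinarith
  have := Nat.mul_lt_mul_of_pos_right hpoly hN
  have hle := congrArg (· * Fintype.card F ^ 3) hsum
  simp only [add_mul] at hle this
  linarith
end
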